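/- arXiv:2409.05613 — 7 statements merged into one kernel-verified Lean document; each statement's English description precedes it below -/
import Mathlib

section
/- Let k ≥ 1 and N ≥ 1 be integers. Then the sum over all partitions λ of N of gcd(λ)^k equals the Dirichlet-convolution value (P ⋆ J_k)(N); explicitly, ∑_{λ ⊢ N} gcd(λ)^k = ∑_{d ∣ N} P(N/d) · J_k(d). -/
/-! Möbius inversion gives `g ^ k = ∑_{d ∣ g} J_k(d)`. Summing this over the partitions `lam` of `N`
with `g = gcd(lam)` and exchanging the two sums, the coefficient of `J_k(d)` is the number of
partitions of `N` all of whose parts are divisible by `d`. Such partitions exist only for `d ∣ N`,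
and dividing every part by `d` puts them in bijection with the partitions of `N / d`
(`card_partition_dvd_gcd`). -/

/-- The `k`-th Jordan totient function, defined as the Möbius-inverse of `d ↦ d^k`:
`J_k(d) = ∑_{e ∣ d} μ(e) · (d/e)^k`. -/
def jordanTotient (k d : ℕ) : ℤ :=
  ∑ e ∈ d.divisors, (ArithmeticFunction.moebius e : ℤ) * ((d / e : ℕ) : ℤ) ^ k

theorem sum_divisors_jordanTotient (k n : ℕ) (hn : 0 < n) :
    ∑ d ∈ n.divisors, jordanTotient k d = (n : ℤ) ^ k := by
  refine (ArithmeticFunction.sum_eq_iff_sum_mul_moebius_eq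
    (f := jordanTotient k) (g := fun m : ℕ => (m : ℤ) ^ k)).2 (fun m _ => ?_) n hn
  simp only [Int.cast_id, jordanTotient]
  exact Nat.sum_divisorsAntidiagonal fun x y : ℕ => ArithmeticFunction.moebius x * (y : ℤ) ^ k

theorem gcd_parts_dvd {N : ℕ} (lam : Nat.Partition N) : Multiset.gcd lam.parts ∣ N := by
  conv_rhs => rw [← lam.parts_sum]
  exact Multiset.dvd_sum fun _ h => Multiset.gcd_dvd h

/-- Multiplying every part by `d` identifies the partitions of `m` with the partitions of `d * m`
all of whose parts are divisible by `d`. -/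
def partitionScaleEquiv (d m : ℕ) (hd : 0 < d) :
    Nat.Partition m ≃ {lam : Nat.Partition (d * m) // d ∣ Multiset.gcd lam.parts} where
  toFun p := ⟨{ parts := p.parts.map (d * ·)
                parts_pos := by
                  intro i hi
                  obtain ⟨j, hj, rfl⟩ := Multiset.mem_map.1 hi
                  exact Nat.mul_pos hd (p.parts_pos hj)
                parts_sum := by rw [Multiset.sum_map_mul_left, Multiset.map_id', p.parts_sum] },
    Multiset.dvd_gcd.2 fun i hi => by
      obtain ⟨j, _, rfl⟩ := Multiset.mem_map.1 hi
      exact Nat.dvd_mul_right d j⟩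
  invFun q :=
    { parts := q.1.parts.map (· / d)
      parts_pos := by
        intro i hi
        obtain ⟨j, hj, rfl⟩ := Multiset.mem_map.1 hi
        exact Nat.div_pos (Nat.le_of_dvd (q.1.parts_pos hj) (Multiset.dvd_gcd.1 q.2 j hj)) hd
      parts_sum := by
        apply Nat.eq_of_mul_eq_mul_left hd
        rw [← Multiset.sum_map_mul_left, Multiset.map_congr rfl
          fun j hj => Nat.mul_div_cancel' (Multiset.dvd_gcd.1 q.2 j hj),
          Multiset.map_id', q.1.parts_sum] }
  left_inv p := by
    apply Nat.Partition.ext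
    simp [Multiset.map_map, Nat.mul_div_cancel_left _ hd]
  right_inv q := by
    apply Subtype.ext
    apply Nat.Partition.ext
    simp only [Multiset.map_map, Function.comp_def]
    rw [Multiset.map_congr rfl
      fun j hj => Nat.mul_div_cancel' (Multiset.dvd_gcd.1 q.2 j hj), Multiset.map_id']

theorem card_partition_dvd_gcd {N d : ℕ} (hN : 1 ≤ N) (hd : d ∣ N) :
    (Finset.univ.filter fun lam : Nat.Partition N => d ∣ Multiset.gcd lam.parts).card =
      Fintype.card (Nat.Partition (N / d)) := by
  have hd0 : 0 < d := Nat.pos_of_dvd_of_pos hd hN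
  obtain ⟨m, rfl⟩ := hd
  rw [Nat.mul_div_cancel_left _ hd0, Fintype.card_congr (partitionScaleEquiv d m hd0),
    Fintype.card_subtype]

/-- The sum over all partitions `lam` of `N` of `gcd(lam)^k` equals the Dirichlet-convolution
value `(P ⋆ J_k)(N) = ∑_{d ∣ N} P(N/d) · J_k(d)`, where `P` is the partition-counting
function. -/
theorem sum_gcd_pow_eq_partition_conv_jordan (k N : ℕ) (hk : 1 ≤ k) (hN : 1 ≤ N) :
    (∑ lam : Nat.Partition N, ((Multiset.gcd lam.parts : ℕ) ^ k : ℤ)) =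
      ∑ d ∈ N.divisors, (Fintype.card (Nat.Partition (N / d)) : ℤ) * jordanTotient k d := by
  have key : ∀ lam : Nat.Partition N, ((Multiset.gcd lam.parts : ℕ) ^ k : ℤ) =
      ∑ d ∈ N.divisors, if d ∣ Multiset.gcd lam.parts then jordanTotient k d else 0 := by
    intro lam
    have hg := gcd_parts_dvd lam
    rw [← sum_divisors_jordanTotient k _ (Nat.pos_of_dvd_of_pos hg hN), ← Finset.sum_filter,
      Nat.divisors_filter_dvd_of_dvd (by omega) hg]
  rw [Finset.sum_congr rfl fun lam _ => key lam, Finset.sum_comm]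
  refine Finset.sum_congr rfl fun d hd => ?_
  rw [← Finset.sum_filter, Finset.sum_const, nsmul_eq_mul,
    card_partition_dvd_gcd hN (Nat.dvd_of_mem_divisors hd)]
end

section
/- Let k ≥ 1 and N ≥ 1 be integers. Then the sum over all partitions λ of N of gcd(λ)^k equals the sum over all vectors v ∈ (ℤ/Nℤ)^k of the partition number P(gcd(v, N)); explicitly, ∑_{λ ⊢ N} gcd(λ)^k = ∑_{v : Fin k → ZMod N} P(gcd(v, N)). -/
/-!
Both sides count the pairs `(lam, v)`, with `lam` a partition of `N` and `v ∈ (ℤ/Nℤ)^k`, such that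
`N ∣ gcd(lam) * gcd(v, N)`.

* Fix `lam` and put `g = gcd(lam)`, a divisor of `N`. The condition says that every coordinate of
  `v` is annihilated by `g`, and the `g`-torsion of the cyclic group `ℤ/Nℤ` has `g` elements, so
  there are `g ^ k` such `v`.
* Fix `v`, put `d = gcd(v, N)` and write `N = d * m`. The condition says that `m` divides every
  part of `lam`; dividing all parts by `m` identifies these partitions with the partitions of `d`.
-/

/-- For `v : Fin k → ZMod N`, the gcd of `N` with the canonical representatives of the
coordinates of `v`. -/
def vecGcd {k N : ℕ} (v : Fin k → ZMod N) : ℕ :=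
  Nat.gcd N (Finset.univ.gcd fun i => (v i).val)

lemma vecGcd_dvd {k N : ℕ} (v : Fin k → ZMod N) : vecGcd v ∣ N := Nat.gcd_dvd_left _ _

lemma partition_gcd_dvd {N : ℕ} (lam : Nat.Partition N) : lam.parts.gcd ∣ N := by
  conv_rhs => rw [← lam.parts_sum]
  exact Multiset.dvd_sum fun _ hx => Multiset.gcd_dvd hx

lemma dvd_mul_vecGcd_iff {k N : ℕ} [NeZero N] (g : ℕ) (v : Fin k → ZMod N) :
    N ∣ g * vecGcd v ↔ ∀ i, g • v i = 0 := by
  rw [vecGcd, ← Nat.gcd_mul_left, Nat.dvd_gcd_iff, and_iff_right (Nat.dvd_mul_left N g),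
    ← normalize_eq g, ← Finset.gcd_mul_left, Finset.dvd_gcd_iff]
  refine forall_congr' fun i => ?_
  rw [← ZMod.natCast_eq_zero_iff]
  simp [nsmul_eq_mul]

/-- The `g`-torsion of `ℤ/Nℤ` is the kernel of an endomorphism of a cyclic group of order `N`. -/
lemma card_torsion_zmod {N g : ℕ} [NeZero N] (hg : g ∣ N) :
    (Finset.univ.filter fun x : ZMod N => g • x = 0).card = g := by
  have h := IsAddCyclic.card_nsmulAddMonoidHom_ker (G := ZMod N) g
  rw [Nat.card_zmod, Nat.gcd_eq_right hg] at h
  rw [← Fintype.card_subtype, ← Nat.card_eq_fintype_card]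
  exact h

lemma card_vec_dvd {k N g : ℕ} [NeZero N] (hg : g ∣ N) :
    (Finset.univ.filter fun v : Fin k → ZMod N => N ∣ g * vecGcd v).card = g ^ k := by
  have h : (Finset.univ.filter fun v : Fin k → ZMod N => N ∣ g * vecGcd v) =
      Fintype.piFinset fun _ => Finset.univ.filter fun x : ZMod N => g • x = 0 := by
    ext v
    simp only [Finset.mem_filter, Finset.mem_univ, true_and, Fintype.mem_piFinset,
      dvd_mul_vecGcd_iff]
  rw [h, Fintype.card_piFinset_const, card_torsion_zmod hg]

/-- The partition of `d * m` obtained by multiplying every part of a partition of `d` by `m`. -/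
def scalePartition {d m : ℕ} (hm : 0 < m) (p : Nat.Partition d) : Nat.Partition (d * m) where
  parts := p.parts.map (· * m)
  parts_pos := by
    intro i hi
    obtain ⟨a, ha, rfl⟩ := Multiset.mem_map.1 hi
    exact Nat.mul_pos (p.parts_pos ha) hm
  parts_sum := by rw [Multiset.sum_map_mul_right, Multiset.map_id', p.parts_sum]

lemma card_partition_dvd {d N : ℕ} (hN : 0 < N) (hd : d ∣ N) :
    (Finset.univ.filter fun lam : Nat.Partition N => N ∣ lam.parts.gcd * d).card =
      Fintype.card (Nat.Partition d) := by
  obtain ⟨m, rfl⟩ := hd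
  -- Cancelling `d`, the condition says that `m` divides every part.
  have hd0 : 0 < d := Nat.pos_of_mul_pos_right hN
  have hm : 0 < m := Nat.pos_of_mul_pos_left hN
  rw [← Finset.card_univ]
  symm
  refine Finset.card_bij (fun p _ => scalePartition hm p) ?_ ?_ ?_
  · intro p _
    rw [Finset.mem_filter, mul_comm (Multiset.gcd _) d, Nat.mul_dvd_mul_iff_left hd0, Multiset.dvd_gcd]
    refine ⟨Finset.mem_univ _, fun b hb => ?_⟩
    obtain ⟨a, -, rfl⟩ := Multiset.mem_map.1 hb
    exact Nat.dvd_mul_left m a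
  · intro p _ q _ h
    exact Nat.Partition.ext (Multiset.map_injective
      (fun a b hab => Nat.eq_of_mul_eq_mul_right hm hab) (congrArg Nat.Partition.parts h))
  · intro lam hlam
    replace hlam := (Finset.mem_filter.1 hlam).2
    rw [mul_comm (Multiset.gcd _) d, Nat.mul_dvd_mul_iff_left hd0, Multiset.dvd_gcd] at hlam
    have hmap : (lam.parts.map (· / m)).map (· * m) = lam.parts := by
      rw [Multiset.map_map]
      conv_rhs => rw [← Multiset.map_id lam.parts]
      exact Multiset.map_congr rfl fun a ha => Nat.div_mul_cancel (hlam a ha)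
    refine ⟨⟨lam.parts.map (· / m), ?_, ?_⟩, Finset.mem_univ _, Nat.Partition.ext hmap⟩
    · intro i hi
      obtain ⟨a, ha, rfl⟩ := Multiset.mem_map.1 hi
      exact Nat.div_pos (Nat.le_of_dvd (lam.parts_pos ha) (hlam a ha)) hm
    · apply Nat.eq_of_mul_eq_mul_right hm
      have hsum := congrArg Multiset.sum hmap
      rwa [Multiset.sum_map_mul_right, Multiset.map_id', lam.parts_sum] at hsum

/-- The sum over all partitions `lam` of `N` of `gcd(lam)^k` equals the sum over all vectors
`v ∈ (ℤ/Nℤ)^k` of the partition number `P(gcd(v, N))`. -/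
theorem sum_gcd_pow_eq_sum_partition_gcd (k N : ℕ) (hk : 1 ≤ k) (hN : 1 ≤ N) [NeZero N] :
    (∑ lam : Nat.Partition N, (Multiset.gcd lam.parts) ^ k) =
      ∑ v : Fin k → ZMod N, Fintype.card (Nat.Partition (vecGcd v)) := by
  -- Double counting of the relation `N ∣ gcd(lam) * gcd(v, N)`.
  have h := Finset.sum_card_bipartiteAbove_eq_sum_card_bipartiteBelow
    (s := (Finset.univ : Finset (Nat.Partition N))) (t := (Finset.univ : Finset (Fin k → ZMod N)))
    (fun lam v => N ∣ lam.parts.gcd * vecGcd v)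
  simp only [Finset.bipartiteAbove, Finset.bipartiteBelow] at h
  rw [Finset.sum_congr rfl fun lam _ => card_vec_dvd (partition_gcd_dvd lam),
    Finset.sum_congr rfl fun v _ => card_partition_dvd hN (vecGcd_dvd v)] at h
  exact h
end

section
/- Let k ≥ 1 and N ≥ 1 be integers and let d be a positive divisor of N. Consider the action of GL_k(ℤ/Nℤ) on column vectors (Fin k → ZMod N) by A • v = A.mulVec v. Then the orbit of the vector w whose first coordinate is N/d and whose other coordinates are 0 is exactly the set of vectors of additive order d: {A.mulVec w | A ∈ GL_k(ZMod N)} = {v : Fin k → ZMod N | addOrderOf v = d}. -/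
/-!
Matrices in `GL_k` act injectively, so they preserve additive orders, and `w = (N/d) e₀` has
order `d`. Conversely, an integer vector `x` spans a submodule of `ℤ^k` of rank at most one, so by
the Smith normal form `x = g • b` with `b` a member of a basis of `ℤ^k`; equivalently
`x = A (g e₀)` with `A ∈ GL_k(ℤ)`. Reducing modulo `N`, every vector `v` over `ℤ/Nℤ` is of the form
`A (g e₀)`. If `v` has order `d`, so has `g`, hence `g = u * (N/d)` for a unit `u`, and `u` is
absorbed into `A` as a scalar matrix.
-/

/-- The Smith normal form of a single integer vector: it is the image of a multiple of a given
standard basis vector under an element of `GL_k(ℤ)`. -/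
lemma exists_GL_int_mulVec_single {k : ℕ} (i₀ : Fin k) (x : Fin k → ℤ) :
    ∃ (A : Matrix.GeneralLinearGroup (Fin k) ℤ) (g : ℤ),
      (A : Matrix (Fin k) (Fin k) ℤ).mulVec (Pi.single i₀ g) = x := by
  -- Any basis whose `j`-th member divides `x` will do, after moving `j` to `i₀`.
  suffices h : ∃ (b : Module.Basis (Fin k) ℤ (Fin k → ℤ)) (j : Fin k) (g : ℤ), x = g • b j by
    obtain ⟨b, j, g, hx⟩ := h
    let b' := b.reindex (Equiv.swap j i₀)
    let e := Pi.basisFun ℤ (Fin k)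
    refine ⟨⟨e.toMatrix b', b'.toMatrix e, e.toMatrix_mul_toMatrix_flip b',
      b'.toMatrix_mul_toMatrix_flip e⟩, g, ?_⟩
    rw [hx]
    ext i
    simp [b', e, Module.Basis.toMatrix_apply, mul_comm]
  obtain ⟨n, s⟩ := Submodule.smithNormalForm (Pi.basisFun ℤ (Fin k)) (Submodule.span ℤ {x})
  have hn : n ≤ 1 := by
    have h := finrank_span_le_card (R := ℤ) ({x} : Set (Fin k → ℤ))
    rw [Module.finrank_eq_card_basis s.bN] at h
    simpa using h
  have hx := congrArg Subtype.val
    (s.bN.sum_repr ⟨x, Submodule.mem_span_singleton_self x⟩)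
  obtain rfl | rfl : n = 0 ∨ n = 1 := by omega
  · exact ⟨s.bM, i₀, 0, by simpa using hx.symm⟩
  · refine ⟨s.bM, s.f 0, s.bN.repr ⟨x, Submodule.mem_span_singleton_self x⟩ 0 * s.a 0, ?_⟩
    rw [Fin.sum_univ_one, Submodule.coe_smul, s.snf, smul_smul] at hx
    exact hx.symm

lemma exists_GL_zmod_mulVec_single {k N : ℕ} (i₀ : Fin k) (v : Fin k → ZMod N) :
    ∃ (A : Matrix.GeneralLinearGroup (Fin k) (ZMod N)) (g : ZMod N),
      (A : Matrix (Fin k) (Fin k) (ZMod N)).mulVec (Pi.single i₀ g) = v := by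
  obtain ⟨x, hx⟩ : ∃ x : Fin k → ℤ, ∀ i, (x i : ZMod N) = v i :=
    Classical.skolem.mp fun i => ZMod.intCast_surjective (v i)
  obtain ⟨A, g, hA⟩ := exists_GL_int_mulVec_single i₀ x
  refine ⟨Matrix.GeneralLinearGroup.map (Int.castRingHom (ZMod N)) A, g, ?_⟩
  ext i
  rw [← hx, ← hA]
  simp

lemma addOrderOf_GL_mulVec {k N : ℕ} (A : Matrix.GeneralLinearGroup (Fin k) (ZMod N))
    (v : Fin k → ZMod N) :
    addOrderOf ((A : Matrix (Fin k) (Fin k) (ZMod N)).mulVec v) = addOrderOf v :=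
  addOrderOf_injective
    (A : Matrix (Fin k) (Fin k) (ZMod N)).mulVecLin.toAddMonoidHom
    (Matrix.mulVec_injective_of_isUnit A.isUnit) v

lemma addOrderOf_single {k N : ℕ} (i : Fin k) (a : ZMod N) :
    addOrderOf (Pi.single i a : Fin k → ZMod N) = addOrderOf a :=
  addOrderOf_injective (AddMonoidHom.single (fun _ : Fin k => ZMod N) i)
    (Pi.single_injective (M := fun _ : Fin k => ZMod N) i) a

lemma addOrderOf_natCast_of_dvd {N e : ℕ} [NeZero N] (he : e ∣ N) :
    addOrderOf (e : ZMod N) = N / e := by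
  rw [ZMod.addOrderOf_coe e (NeZero.ne N), Nat.gcd_eq_right he]

lemma addOrderOf_isUnit_mul {N : ℕ} {u : ZMod N} (hu : IsUnit u) (a : ZMod N) :
    addOrderOf (u * a) = addOrderOf a :=
  addOrderOf_injective (AddMonoidHom.mulLeft u) hu.mul_right_injective a


/-- Let `d` be a positive divisor of `N`, and let `w ∈ (ℤ/Nℤ)^k` be the vector whose first
coordinate is `N/d` and whose other coordinates are `0`.  Then the orbit of `w` under the
action of `GL_k(ℤ/Nℤ)` on column vectors by `A • v = A.mulVec v` is exactly the set of
vectors of additive order `d`. -/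
theorem orbit_eq_addOrderOf_set (k N d : ℕ) (hk : 1 ≤ k) (hN : 1 ≤ N) [NeZero N]
    (hd : d ∣ N) (hd0 : 0 < d)
    (w : Fin k → ZMod N)
    (hw0 : w ⟨0, hk⟩ = ((N / d : ℕ) : ZMod N))
    (hw : ∀ i : Fin k, i ≠ ⟨0, hk⟩ → w i = 0) :
    {v : Fin k → ZMod N |
        ∃ A : Matrix.GeneralLinearGroup (Fin k) (ZMod N),
          (A : Matrix (Fin k) (Fin k) (ZMod N)).mulVec w = v} =
      {v : Fin k → ZMod N | addOrderOf v = d} := by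
  have hw' : w = Pi.single ⟨0, hk⟩ ((N / d : ℕ) : ZMod N) := by
    ext i
    by_cases hi : i = ⟨0, hk⟩
    · rw [hi, hw0, Pi.single_eq_same]
    · rw [hw i hi, Pi.single_eq_of_ne hi]
  ext v
  simp only [Set.mem_ofPred_eq]
  constructor
  · rintro ⟨A, rfl⟩
    rw [addOrderOf_GL_mulVec, hw', addOrderOf_single,
      addOrderOf_natCast_of_dvd (Nat.div_dvd_of_dvd hd), Nat.div_div_self hd (NeZero.ne N)]
  · intro hv
    obtain ⟨A, g, rfl⟩ := exists_GL_zmod_mulVec_single ⟨0, hk⟩ v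
    obtain ⟨e, he, u, hu, rfl⟩ := ZMod.eq_unit_mul_divisor g
    rw [addOrderOf_GL_mulVec, addOrderOf_single, addOrderOf_isUnit_mul hu,
      addOrderOf_natCast_of_dvd he] at hv
    have he' : N / d = e := by rw [← hv, Nat.div_div_self he (NeZero.ne N)]
    refine ⟨A * Matrix.GeneralLinearGroup.scalar (Fin k) hu.unit, ?_⟩
    rw [hw', he', Units.val_mul, ← Matrix.mulVec_mulVec]
    congr 1
    ext i
    simp [Pi.single_apply]
end

section
/- Let N ≥ 1 be an integer and let v : Fin 3 → ZMod N be any vector. Set g = Nat.gcd N (Nat.gcd (v 0).val (Nat.gcd (v 1).val (v 2).val)). Then there exists a matrix A in the special linear group SL₃(ℤ/Nℤ) such that A.mulVec v is the vector (g, 0, 0), where g is regarded as an element of ZMod N. In other words, every element of (ℤ/Nℤ)^3 is an SL₃(ℤ/Nℤ)-translate of (d, 0, 0) for the divisor d = gcd(v, N) of N. -/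
/-!
Bézout's identity gives, for natural numbers `x, y`, a determinant-one matrix sending `(x, y)` to
`(gcd x y, 0)`. Lifting `v` to its canonical representatives and applying this to the last two
coordinates, then to the first two, moves `v` to `(k, 0, 0)`, where `k` is the gcd of the
representatives. As `N = 0` in `ZMod N`, this vector is also `(k, N, 0)`, and a third application to
the first two coordinates yields `(gcd k N, 0, 0)`.
-/

/-- Bézout's identity as the entries of a matrix `!![p, q; r, s]` of determinant one sending
`(x, y)` to `(gcd x y, 0)`. -/
lemma exists_det_one_gcd (R : Type*) [CommRing R] (x y : ℕ) :
    ∃ p q r s : R, p * s - q * r = 1 ∧ p * x + q * y = (Nat.gcd x y : ℕ) ∧ r * x + s * y = 0 := by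
  rcases Nat.eq_zero_or_pos (Nat.gcd x y) with h | h
  · obtain ⟨rfl, rfl⟩ := Nat.gcd_eq_zero_iff.mp h
    exact ⟨1, 0, 0, 1, by simp⟩
  · obtain ⟨a, ha⟩ := Nat.gcd_dvd_left x y
    obtain ⟨b, hb⟩ := Nat.gcd_dvd_right x y
    have hbez := Nat.gcd_eq_gcd_ab x y
    generalize Nat.gcdA x y = p at hbez
    generalize Nat.gcdB x y = q at hbez
    generalize Nat.gcd x y = g at *
    subst ha hb
    have hg : (g : ℤ) ≠ 0 := by exact_mod_cast h.ne'
    have hdet : p * a + q * b = 1 := by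
      apply mul_left_cancel₀ hg
      push_cast at hbez
      linear_combination -hbez
    have hdet' : (p : R) * a + q * b = 1 := by exact_mod_cast congrArg (Int.cast (R := R)) hdet
    refine ⟨p, q, -b, a, ?_, ?_, ?_⟩
    · linear_combination hdet'
    · push_cast
      linear_combination (g : R) * hdet'
    · push_cast
      ring

/-- Every vector `v ∈ (ℤ/Nℤ)^3` is an `SL₃(ℤ/Nℤ)`-translate of `(g, 0, 0)` where
`g = gcd(v, N)` is the gcd of `N` with the canonical representatives of the coordinates
of `v`. -/
theorem exists_SL3_mulVec_eq_gcd_vec (N : ℕ) (hN : 1 ≤ N) (v : Fin 3 → ZMod N) :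
    ∃ A : Matrix.SpecialLinearGroup (Fin 3) (ZMod N),
      (A : Matrix (Fin 3) (Fin 3) (ZMod N)).mulVec v =
        ![((Nat.gcd N (Nat.gcd (v 0).val (Nat.gcd (v 1).val (v 2).val)) : ℕ) : ZMod N), 0, 0] := by
  have : NeZero N := ⟨by omega⟩
  rw [Nat.gcd_comm N]
  have hv : v = ![((v 0).val : ZMod N), ((v 1).val : ZMod N), ((v 2).val : ZMod N)] := by
    ext i
    fin_cases i <;> simp
  generalize (v 0).val = a at *
  generalize (v 1).val = b at *
  generalize (v 2).val = c at *
  subst hv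
  obtain ⟨p₁, q₁, r₁, s₁, d₁, e₁, f₁⟩ := exists_det_one_gcd (ZMod N) b c
  obtain ⟨p₂, q₂, r₂, s₂, d₂, e₂, f₂⟩ := exists_det_one_gcd (ZMod N) a (b.gcd c)
  obtain ⟨p₃, q₃, r₃, s₃, d₃, e₃, f₃⟩ := exists_det_one_gcd (ZMod N) (a.gcd (b.gcd c)) N
  rw [ZMod.natCast_self, mul_zero, add_zero] at e₃ f₃
  let M₁ : Matrix.SpecialLinearGroup (Fin 3) (ZMod N) :=
    ⟨!![1, 0, 0; 0, p₁, q₁; 0, r₁, s₁], by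
      simp [Matrix.det_fin_three]; linear_combination d₁⟩
  let M₂ : Matrix.SpecialLinearGroup (Fin 3) (ZMod N) :=
    ⟨!![p₂, q₂, 0; r₂, s₂, 0; 0, 0, 1], by
      simp [Matrix.det_fin_three]; linear_combination d₂⟩
  let M₃ : Matrix.SpecialLinearGroup (Fin 3) (ZMod N) :=
    ⟨!![p₃, q₃, 0; r₃, s₃, 0; 0, 0, 1], by
      simp [Matrix.det_fin_three]; linear_combination d₃⟩
  have h₁ : (M₁ : Matrix (Fin 3) (Fin 3) (ZMod N)).mulVec ![(a : ZMod N), b, c] =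
      ![(a : ZMod N), (b.gcd c : ℕ), 0] := by
    ext i
    fin_cases i <;> simp [M₁, Matrix.mulVec, dotProduct, Fin.sum_univ_three, e₁, f₁]
  have h₂ : (M₂ : Matrix (Fin 3) (Fin 3) (ZMod N)).mulVec ![(a : ZMod N), (b.gcd c : ℕ), 0] =
      ![((a.gcd (b.gcd c) : ℕ) : ZMod N), 0, 0] := by
    ext i
    fin_cases i <;> simp [M₂, Matrix.mulVec, dotProduct, Fin.sum_univ_three, e₂, f₂]
  have h₃ : (M₃ : Matrix (Fin 3) (Fin 3) (ZMod N)).mulVec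
      ![((a.gcd (b.gcd c) : ℕ) : ZMod N), 0, 0] =
      ![(((a.gcd (b.gcd c)).gcd N : ℕ) : ZMod N), 0, 0] := by
    ext i
    fin_cases i <;> simp [M₃, Matrix.mulVec, dotProduct, Fin.sum_univ_three, e₃, f₃]
  refine ⟨M₃ * (M₂ * M₁), ?_⟩
  rw [Matrix.SpecialLinearGroup.coe_mul, Matrix.SpecialLinearGroup.coe_mul,
    ← Matrix.mulVec_mulVec, ← Matrix.mulVec_mulVec, h₁, h₂, h₃]
end

section
/- Let ℓ ≥ 1, m ≥ 1, r₁ ≥ 0, r₂ ≥ 0 be natural numbers. Let a : List ℕ be a list of positive natural numbers with a.length ≤ ℓ and a.sum = ℓ·m + r₁, and let b : List ℕ be a list of positive natural numbers with b.sum = r₂. Let l be the weakly decreasing sort of the concatenation a ++ b. Then the partition (m^ℓ, 1^{r₁+r₂}) is dominated by l: for every p : ℕ, ((List.replicate ℓ m ++ List.replicate (r₁ + r₂) 1).take p).sum ≤ (l.take p).sum. -/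
/-!
Write `S k` for the sum of the first `k` entries of the sorted list `l`. The first `ℓ` entries of
`l` sum to at least as much as any `ℓ` entries do, and the entries of `a` are at most `ℓ` of the
entries of `l`, so `ℓ * m + r₁ ≤ S ℓ` (`sum_le_sum_take_of_sublist`).

For `p ≤ ℓ`, the averages `S p / p` of a weakly decreasing list weakly decrease with `p`, so
`ℓ * m ≤ S ℓ` gives `p * m ≤ S p` (`mul_le_sum_take`).

For `ℓ ≤ p`, either `l` is exhausted and `S p` is the full sum `ℓ * m + r₁ + r₂`, or each of the
entries between `ℓ` and `p` contributes at least `1` (`sum_take_add_le`), so that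
`S p ≥ ℓ * m + (p - ℓ)`.
-/

/-- In a weakly decreasing list, the first `k` entries have the largest sum among all
subfamilies of at most `k` entries. -/
theorem sum_le_sum_take_of_sublist {l : List ℕ} (hl : l.Pairwise (· ≥ ·)) :
    ∀ {s : List ℕ} {k : ℕ}, s.Sublist l → s.length ≤ k → s.sum ≤ (l.take k).sum := by
  induction l with
  | nil => intro s k h _; simp_all
  | cons x l ih =>
    intro s k h hk
    rw [List.pairwise_cons] at hl
    obtain _ | ⟨y, t⟩ := s
    · simp
    obtain _ | k := k
    · simp at hk
    have hy : y ≤ x := by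
      rcases List.mem_cons.1 (h.subset List.mem_cons_self) with rfl | hy
      · exact le_rfl
      · exact hl.1 y hy
    have ht := ih hl.2 h.tail (k := k) (by simpa using hk)
    simp only [List.tail_cons] at ht
    simp only [List.take_succ_cons, List.sum_cons]
    omega

/-- The averages of the initial segments of a weakly decreasing list weakly decrease: if the first
`n` entries have average at least `m`, then so do the first `p` entries for every `p ≤ n`. Beyond
its end the list counts as continued by zeros. -/
theorem mul_le_sum_take {l : List ℕ} (hl : l.Pairwise (· ≥ ·)) {m p n : ℕ} (hpn : p ≤ n)
    (h : n * m ≤ (l.take n).sum) : p * m ≤ (l.take p).sum := by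
  induction n, hpn using Nat.le_induction with
  | base => exact h
  | succ n _ ih =>
    apply ih
    by_cases hn : n < l.length
    · rw [List.sum_take_succ l n hn, add_one_mul] at h
      by_cases hm : l[n] ≤ m
      · omega
      -- The entry at index `n` exceeds `m`, hence so do all entries before it.
      · have hle : ∀ x ∈ l.take n, m ≤ x := by
          intro x hx
          obtain ⟨i, hi, rfl⟩ := List.mem_take_iff_getElem.1 hx
          have := List.pairwise_iff_getElem.1 hl i n (by omega) hn (by omega)
          omega
        have := List.card_nsmul_le_sum _ m hle
        rwa [List.length_take, min_eq_left hn.le, smul_eq_mul] at this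
    · rw [List.take_of_length_le (by omega)] at h ⊢
      exact (Nat.mul_le_mul_right m n.le_succ).trans h

theorem sum_take_add_le {l : List ℕ} (hl : ∀ x ∈ l, 0 < x) {k p : ℕ} (hkp : k ≤ p)
    (hp : p ≤ l.length) : (l.take k).sum + (p - k) ≤ (l.take p).sum := by
  induction p, hkp using Nat.le_induction with
  | base => simp
  | succ p _ ih =>
    have := ih (by omega)
    have := hl _ (List.getElem_mem (show p < l.length by omega))
    rw [List.sum_take_succ l p (by omega)]
    omega

/-- Let `a` be a composition (list of positive naturals) with at most `ℓ` parts and sum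
`ℓ·m + r₁`, and `b` a composition with sum `r₂`.  Let `l` be the weakly decreasing sort of
the concatenation `a ++ b` (the associated partition `sort(a, b)`).  Then the partition
`(m^ℓ, 1^{r₁+r₂})` is dominated by `l`: every partial sum of `(m^ℓ, 1^{r₁+r₂})` is at most
the corresponding partial sum of `l`. -/
theorem replicate_dominated_by_sorted_concat (ℓ m r₁ r₂ : ℕ) (hℓ : 1 ≤ ℓ) (hm : 1 ≤ m)
    (a b : List ℕ) (hapos : ∀ x ∈ a, 0 < x) (hbpos : ∀ x ∈ b, 0 < x)
    (halen : a.length ≤ ℓ) (hasum : a.sum = ℓ * m + r₁) (hbsum : b.sum = r₂) :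
    ∀ p : ℕ,
      ((List.replicate ℓ m ++ List.replicate (r₁ + r₂) 1).take p).sum ≤
        (((a ++ b).mergeSort (· ≥ ·)).take p).sum := by
  intro p
  set l := (a ++ b).mergeSort (· ≥ ·) with hl
  have hperm : l.Perm (a ++ b) := List.mergeSort_perm _ _
  have hsort : l.Pairwise (· ≥ ·) := List.pairwise_mergeSort' _ _
  have hpos : ∀ x ∈ l, 0 < x := by
    intro x hx
    rcases List.mem_append.1 (hperm.mem_iff.1 hx) with h | h
    exacts [hapos x h, hbpos x h]
  have hsum : l.sum = ℓ * m + r₁ + r₂ := by rw [hperm.sum_eq, List.sum_append, hasum, hbsum]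
  have htop : ℓ * m + r₁ ≤ (l.take ℓ).sum := by
    obtain ⟨s, hsa, hsl⟩ : a.Subperm l :=
      (List.sublist_append_left a b).subperm.trans hperm.symm.subperm
    rw [← hasum, ← hsa.sum_eq]
    exact sum_le_sum_take_of_sublist hsort hsl (hsa.length_eq.trans_le halen)
  simp only [List.take_append, List.take_replicate, List.length_replicate, List.sum_append,
    List.sum_replicate, smul_eq_mul, mul_one]
  rcases le_total p ℓ with hp | hp
  · have := mul_le_sum_take hsort hp (m := m) (by omega)
    simpa [min_eq_left hp, Nat.sub_eq_zero_of_le hp] using this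
  · rw [min_eq_right hp]
    rcases le_total l.length p with hlp | hlp
    · rw [List.take_of_length_le hlp]
      omega
    · have := sum_take_add_le hpos hp hlp
      omega
end

section
/- Let N ≥ 1 and let σ be a permutation of Fin N. Let f : (Fin N → ℤ) →+ (Fin N → ℤ) be the additive group homomorphism given by (f x) i = x i − x (σ i) (the map 1 − σ on the lattice ℤ^N with σ permuting coordinates). Then the quotient group (Fin N → ℤ) ⧸ f.range is torsion-free; equivalently, for every y : Fin N → ℤ and every natural number c > 0, if c • y lies in the range of f then y lies in the range of f. (This is the GL_N case of Lemma 6.5: Im(1−σ) = U_σ^⊥ ∩ Λ for Λ = Λ_{GL_N} = ℤ^N.) -/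
/-- The additive endomorphism `1 - σ` of the lattice `ℤ^N`, where the permutation `σ` acts
on `ℤ^N` by permuting coordinates: `(f x) i = x i - x (σ i)`. -/
def oneSubPerm (N : ℕ) (σ : Equiv.Perm (Fin N)) : (Fin N → ℤ) →+ (Fin N → ℤ) :=
  AddMonoidHom.mk' (fun x i => x i - x (σ i)) (by
    intro a b
    funext i
    simp [Pi.add_apply]
    ring)

/-- GL_N case of Lemma 6.5: the quotient of `ℤ^N` by the image of `1 - σ` is torsion-free;
equivalently, if `c • y ∈ Im(1 - σ)` for some `c > 0`, then `y ∈ Im(1 - σ)`. -/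
theorem quotient_range_oneSubPerm_torsionFree (N : ℕ) (hN : 1 ≤ N)
    (σ : Equiv.Perm (Fin N)) :
    ∀ (y : Fin N → ℤ) (c : ℕ), 0 < c →
      c • y ∈ (oneSubPerm N σ).range → y ∈ (oneSubPerm N σ).range := by
  rintro y c hc ⟨x, hx⟩
  -- As `x i = x (σ i) + c * y i`, floor division by `c` gives `x i / c = x (σ i) / c + y i`,
  -- so the integer vector `i ↦ x i / c` is a preimage of `y`.
  refine ⟨fun i => x i / (c : ℤ), funext fun i => ?_⟩
  have hi : x i - x (σ i) = c * y i := by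
    simpa [oneSubPerm] using congrFun hx i
  have hc' : (c : ℤ) ≠ 0 := by exact_mod_cast hc.ne'
  change x i / (c : ℤ) - x (σ i) / (c : ℤ) = y i
  rw [sub_eq_iff_eq_add'.mp hi, Int.add_mul_ediv_left _ _ hc', add_sub_cancel_left]
end

section
/- Let N ≥ 1 and let σ be a permutation of Fin N. Let f : (Fin N → ℤ) →+ (Fin N → ℤ) be given by (f x) i = x i − x (σ i), and let H be the additive subgroup of Fin N → ℤ generated by the range of f together with the all-ones vector (fun _ => 1). Let g be the greatest common divisor of the sizes of the orbits of σ on Fin N (i.e. the gcd of the parts of the cycle type of σ, counting fixed points as parts of size 1). Then the torsion subgroup of the quotient group (Fin N → ℤ) ⧸ H is a finite cyclic group of order g, i.e. it is isomorphic as an additive group to ZMod g. (This is the SL_N case of Lemma 6.5: the index of Im(1−σ) in U_σ^⊥ inside Λ_{SL_N} = ℤ^N / ℤ·(1,…,1) equals g, and the quotient is cyclic.) -/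
namespace OneSubPerm

variable {N : ℕ} (σ : Equiv.Perm (Fin N))

/-- The orbit sum map `s`: the `i`-th coordinate of `s x` is the sum of `x` over the `σ`-orbit
of `i`, the orbit being encoded by the relation `σ.SameCycle i`. -/
noncomputable def orbitSum : (Fin N → ℤ) →+ (Fin N → ℤ) where
  toFun x i := ∑ j, if σ.SameCycle i j then x j else 0
  map_zero' := by ext; simp
  map_add' x y := by
    ext i
    simp only [Pi.add_apply, ← Finset.sum_add_distrib]
    refine Finset.sum_congr rfl fun j _ => ?_
    split_ifs <;> simp

lemma orbitSum_apply (x : Fin N → ℤ) (i : Fin N) :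
    orbitSum σ x i = ∑ j, if σ.SameCycle i j then x j else 0 := rfl

lemma orbitSum_congr (x : Fin N → ℤ) {i j : Fin N} (h : σ.SameCycle i j) :
    orbitSum σ x i = orbitSum σ x j := by
  rw [orbitSum_apply, orbitSum_apply]
  refine Finset.sum_congr rfl fun k _ => ?_
  have : σ.SameCycle i k ↔ σ.SameCycle j k := ⟨fun hk => h.symm.trans hk, fun hk => h.trans hk⟩
  simp only [this]

lemma orbitSum_one (i : Fin N) :
    orbitSum σ (fun _ => 1) i = Nat.card (MulAction.orbit (Subgroup.zpowers σ) i) := by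
  have h : MulAction.orbit (Subgroup.zpowers σ) i = {j | σ.SameCycle i j} := by
    ext j
    constructor
    · rintro ⟨⟨_, n, rfl⟩, rfl⟩
      exact ⟨n, rfl⟩
    · rintro ⟨n, rfl⟩
      exact ⟨⟨σ ^ n, n, rfl⟩, rfl⟩
  rw [h, orbitSum_apply, Finset.sum_boole, Nat.card_eq_fintype_card, Fintype.card_subtype]
  simp

lemma orbitSum_oneSubPerm (x : Fin N → ℤ) : orbitSum σ (oneSubPerm N σ x) = 0 := by
  ext i
  have h : ∀ j, (if σ.SameCycle i j then oneSubPerm N σ x j else 0) =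
      (if σ.SameCycle i j then x j else 0) -
        (if σ.SameCycle i (σ j) then x (σ j) else 0) := by
    intro j
    simp only [Equiv.Perm.sameCycle_apply_right]
    split_ifs <;> simp [oneSubPerm]
  rw [orbitSum_apply, Finset.sum_congr rfl fun j _ => h j, Finset.sum_sub_distrib,
    Equiv.sum_comp σ fun j => if σ.SameCycle i j then x j else 0]
  simp

/-- A chosen representative of the `σ`-orbit of `i`. -/
noncomputable def rep (i : Fin N) : Fin N :=
  (Quotient.mk (Equiv.Perm.SameCycle.setoid σ) i).out

lemma sameCycle_rep (i : Fin N) : σ.SameCycle (rep σ i) i :=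
  Quotient.exact (s := Equiv.Perm.SameCycle.setoid σ) (Quotient.out_eq _)

lemma rep_eq {i j : Fin N} (h : σ.SameCycle i j) : rep σ i = rep σ j :=
  congrArg Quotient.out (Quotient.sound (s := Equiv.Perm.SameCycle.setoid σ) h)

/-- Basis vectors in the same orbit agree modulo `Im(1 - σ)`. -/
lemma mk_single_eq_of_sameCycle {i j : Fin N} (h : σ.SameCycle i j) :
    (QuotientAddGroup.mk (Pi.single i 1) : (Fin N → ℤ) ⧸ (oneSubPerm N σ).range) =
      QuotientAddGroup.mk (Pi.single j 1) := by
  obtain ⟨n, -, -, rfl⟩ := h.exists_pow_eq σ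
  induction n with
  | zero => simp
  | succ n ih =>
    rw [ih ⟨n, rfl⟩, QuotientAddGroup.eq]
    -- `(1 - σ) e_{σ k} = e_{σ k} - e_k`, since `e_{σ k} ∘ σ = e_k`.
    refine ⟨Pi.single ((σ ^ (n + 1)) i) 1, ?_⟩
    ext l
    simp [oneSubPerm, Pi.single_apply, pow_succ', sub_eq_neg_add]

lemma mem_range_of_orbitSum_eq_zero {x : Fin N → ℤ} (hx : orbitSum σ x = 0) :
    x ∈ (oneSubPerm N σ).range := by
  rw [← QuotientAddGroup.eq_zero_iff]
  have h1 : x = ∑ i, x i • (Pi.single i 1 : Fin N → ℤ) := by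
    ext j
    simp [Finset.sum_apply, Pi.single_apply]
  have h2 : ∑ i, x i • (Pi.single (rep σ i) 1 : Fin N → ℤ) = 0 := by
    ext j
    by_cases hj : rep σ j = j
    · have h3 : ∀ i, (x i • (Pi.single (rep σ i) 1 : Fin N → ℤ)) j =
          if σ.SameCycle j i then x i else 0 := by
        intro i
        have : j = rep σ i ↔ σ.SameCycle j i :=
          ⟨fun h => h ▸ sameCycle_rep σ i, fun h => hj.symm.trans (rep_eq σ h)⟩
        simp [Pi.single_apply, this]
      rw [Finset.sum_apply, Finset.sum_congr rfl fun i _ => h3 i, ← orbitSum_apply, hx]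
    · have h3 : ∀ i, j ≠ rep σ i := by
        rintro i rfl
        exact hj (rep_eq σ (sameCycle_rep σ i))
      simp [Finset.sum_apply, h3]
  have h4 := congrArg (QuotientAddGroup.mk' (oneSubPerm N σ).range) h2
  have h5 := congrArg (QuotientAddGroup.mk' (oneSubPerm N σ).range) h1
  rw [map_sum] at h4 h5
  simp only [map_zsmul, QuotientAddGroup.mk'_apply] at h4 h5
  refine h5.trans (Eq.trans ?_ h4)
  exact Finset.sum_congr rfl fun i _ => by
    rw [mk_single_eq_of_sameCycle σ (sameCycle_rep σ i)]

/-- `H` consists of the vectors whose orbit sums are an integer multiple of the orbit sizes. -/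
lemma mem_range_sup_closure_iff (x : Fin N → ℤ) :
    x ∈ (oneSubPerm N σ).range ⊔ AddSubgroup.closure {(fun _ => 1 : Fin N → ℤ)} ↔
      ∃ m : ℤ, orbitSum σ x = m • orbitSum σ (fun _ => 1) := by
  simp only [AddSubgroup.mem_sup, AddSubgroup.mem_closure_singleton]
  constructor
  · rintro ⟨_, ⟨y, rfl⟩, _, ⟨m, rfl⟩, rfl⟩
    exact ⟨m, by rw [map_add, orbitSum_oneSubPerm, zero_add, map_zsmul]⟩
  · rintro ⟨m, hm⟩
    refine ⟨x - m • (fun _ => 1), mem_range_of_orbitSum_eq_zero σ ?_, _, ⟨m, rfl⟩, by simp⟩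
    rw [map_sub, map_zsmul, hm, sub_self]

/-- Any vector constant on orbits is a vector of orbit sums: place its values at the chosen
representatives. -/
lemma exists_orbitSum_eq (y : Fin N → ℤ) (hy : ∀ i j, σ.SameCycle i j → y i = y j) :
    ∃ x, orbitSum σ x = y := by
  refine ⟨fun j => if rep σ j = j then y j else 0, ?_⟩
  ext i
  rw [orbitSum_apply, Finset.sum_eq_single (rep σ i)]
  · rw [if_pos (sameCycle_rep σ i).symm, if_pos (rep_eq σ (sameCycle_rep σ i)),
      hy _ _ (sameCycle_rep σ i)]
  · intro j _ hj
    split_ifs with h1 h2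
    · exact absurd (h2.symm.trans (rep_eq σ h1).symm) hj
    · rfl
    · rfl
  · simp

end OneSubPerm

/-- Bézout's identity for the gcd of finitely many natural numbers. -/
lemma exists_sum_mul_eq_finset_gcd {ι : Type*} (s : Finset ι) (d : ι → ℕ) :
    ∃ a : ι → ℤ, ∑ i ∈ s, a i * (d i : ℤ) = (s.gcd d : ℕ) := by
  obtain ⟨a, ha⟩ := Finset.gcd_eq_sum_mul s fun i => (d i : ℤ)
  have h : s.gcd (fun i => (d i : ℤ)) ∣ (s.gcd d : ℕ) := by
    rw [← Int.natAbs_dvd, Int.natCast_dvd_natCast]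
    refine Finset.dvd_gcd fun i hi => ?_
    rw [← Int.natCast_dvd_natCast, Int.natAbs_dvd]
    exact Finset.gcd_dvd hi
  obtain ⟨c, hc⟩ := h
  refine ⟨fun i => a i * c, ?_⟩
  rw [hc, ha, Finset.sum_mul]
  exact Finset.sum_congr rfl fun i _ => by ring


open OneSubPerm

/-- SL_N case of Lemma 6.5: let `H` be the subgroup of `ℤ^N` generated by `Im(1 - σ)` and
the all-ones vector, and let `g` be the gcd of the cycle lengths of `σ` (the gcd of the
parts of the cycle type, counting fixed points).  Then the torsion subgroup of
`ℤ^N / H` is a finite cyclic group of order `g`, i.e. isomorphic to `ℤ/gℤ`. -/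
theorem torsion_quotient_iso_zmod_gcd_cycleType (N : ℕ) (hN : 1 ≤ N)
    (σ : Equiv.Perm (Fin N)) :
    Nonempty
      ((AddCommGroup.torsion
          ((Fin N → ℤ) ⧸
            ((oneSubPerm N σ).range ⊔
              AddSubgroup.closure {(fun _ => 1 : Fin N → ℤ)}))) ≃+
        ZMod (Finset.univ.gcd fun i : Fin N =>
          Nat.card (MulAction.orbit (Subgroup.zpowers σ) i))) := by
  set g := Finset.univ.gcd fun i : Fin N =>
    Nat.card (MulAction.orbit (Subgroup.zpowers σ) i) with hg
  set H := (oneSubPerm N σ).range ⊔ AddSubgroup.closure {(fun _ => 1 : Fin N → ℤ)} with hH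
  obtain ⟨a, ha⟩ := exists_sum_mul_eq_finset_gcd Finset.univ fun i : Fin N =>
    Nat.card (MulAction.orbit (Subgroup.zpowers σ) i)
  rw [← hg] at ha
  have hdvd : ∀ i, (g : ℤ) ∣ orbitSum σ (fun _ => 1) i := fun i => by
    rw [orbitSum_one, Int.natCast_dvd_natCast]
    exact Finset.gcd_dvd (Finset.mem_univ i)
  simp only [← orbitSum_one] at ha
  set d := orbitSum σ (fun _ => 1) with hd
  -- `N ≥ 1` is what makes `g` nonzero.
  have hg0 : (g : ℤ) ≠ 0 := by
    intro h
    have h1 : d ⟨0, hN⟩ = 0 := by simpa [h] using hdvd ⟨0, hN⟩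
    rw [hd, orbitSum_one, Nat.cast_eq_zero] at h1
    have : Nonempty (MulAction.orbit (Subgroup.zpowers σ) (⟨0, hN⟩ : Fin N)) :=
      ⟨⟨_, MulAction.mem_orbit_self _⟩⟩
    exact Nat.card_pos.ne' h1
  let ψ : (Fin N → ℤ) →+ ℤ :=
    { toFun := fun x => ∑ i, a i * orbitSum σ x i
      map_zero' := by simp
      map_add' := fun x y => by simp [mul_add, Finset.sum_add_distrib] }
  have hψ : ∀ x, ψ x = ∑ i, a i * orbitSum σ x i := fun _ => rfl
  have hψ' : ∀ x (k e : ℤ) (y : Fin N → ℤ), e • orbitSum σ x = k • y →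
      e * ψ x = k * ∑ i, a i * y i := by
    intro x k e y h
    rw [hψ, Finset.mul_sum, Finset.mul_sum]
    refine Finset.sum_congr rfl fun i _ => ?_
    have := congrFun h i
    simp only [Pi.smul_apply, smul_eq_mul] at this
    linear_combination a i * this
  let φ : (Fin N → ℤ) ⧸ H →+ ZMod g :=
    QuotientAddGroup.lift H ((Int.castAddHom (ZMod g)).comp ψ) (by
      intro x hx
      obtain ⟨m, hm⟩ := (mem_range_sup_closure_iff σ x).1 hx
      have := hψ' x m 1 d (by simpa using hm)
      rw [ha, one_mul] at this
      simp [this])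
  have hφ : ∀ x, φ (QuotientAddGroup.mk x) = (ψ x : ZMod g) := fun _ => rfl
  refine ⟨AddEquiv.ofBijective (φ.comp (AddCommGroup.torsion _).subtype) ⟨?_, ?_⟩⟩
  · rw [injective_iff_map_eq_zero]
    rintro ⟨q, hq⟩ h0
    obtain ⟨x, rfl⟩ := QuotientAddGroup.mk_surjective q
    obtain ⟨n, hn, hnx⟩ := isOfFinAddOrder_iff_nsmul_eq_zero.1 hq
    rw [← QuotientAddGroup.mk_nsmul, QuotientAddGroup.eq_zero_iff] at hnx
    obtain ⟨m, hm⟩ := (mem_range_sup_closure_iff σ _).1 hnx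
    rw [map_nsmul, ← natCast_zsmul] at hm
    have h1 := hψ' x m n d hm
    rw [ha] at h1
    have h2 : (ψ x : ZMod g) = 0 := h0
    obtain ⟨c, hc⟩ := (ZMod.intCast_zmod_eq_zero_iff_dvd _ _).1 h2
    have hmc : m = n * c := by
      apply mul_right_cancel₀ hg0
      rw [← h1, hc]; ring
    apply Subtype.ext
    refine (QuotientAddGroup.eq_zero_iff x).2 ((mem_range_sup_closure_iff σ x).2 ⟨c, ?_⟩)
    have hn0 : (n : ℤ) ≠ 0 := by exact_mod_cast hn.ne'
    ext i
    have := congrFun hm i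
    simp only [Pi.smul_apply, smul_eq_mul] at this ⊢
    apply mul_left_cancel₀ hn0
    rw [this, hmc]; ring
  · intro z
    obtain ⟨k, rfl⟩ := ZMod.intCast_surjective z
    obtain ⟨x, hx⟩ := exists_orbitSum_eq σ (fun i => k * (d i / g)) fun i j hij => by
      simp only [hd, orbitSum_congr σ _ hij]
    have hgx : (g : ℤ) • orbitSum σ x = k • d := by
      ext i
      simp only [hx, Pi.smul_apply, smul_eq_mul]
      rw [mul_left_comm, Int.mul_ediv_cancel' (hdvd i)]
    have hk : ψ x = k := by
      have := hψ' x k g d hgx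
      rw [ha, mul_comm k] at this
      exact mul_left_cancel₀ hg0 this
    refine ⟨⟨QuotientAddGroup.mk x, isOfFinAddOrder_iff_nsmul_eq_zero.2
      ⟨g, Nat.pos_of_ne_zero (by exact_mod_cast hg0), ?_⟩⟩, ?_⟩
    · rw [← QuotientAddGroup.mk_nsmul, QuotientAddGroup.eq_zero_iff]
      exact (mem_range_sup_closure_iff σ _).2 ⟨k, by rw [map_nsmul, ← natCast_zsmul, hgx]⟩
    · change (ψ x : ZMod g) = k
      rw [hk]
end
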